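/- Let μ, ν be probability measures on ℝ^d, T ≥ 1, and for each t ∈ {1,…,T} let σ_t > 0 and w_t > 0. Define DiJS(μ‖ν) = Σ_{t=1}^T w_t · JS(μ ∗ γ_{σ_t} ‖ ν ∗ γ_{σ_t}), where γ_σ = N(0, σ²·I_d) and JS is the Jensen–Shannon divergence. Then DiJS(μ‖ν) = 0 if and only if μ = ν. -/

import Mathlib

open MeasureTheory Real
open scoped ENNReal Classical

/-- The isotropic centered Gaussian measure `N(0, σ²·I_d)` on `ℝ^d`, given by its
density `(2πσ²)^(-d/2) · exp(-‖x‖²/(2σ²))` with respect to Lebesgue measure. -/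
noncomputable def gaussianIso (d : ℕ) (σ : ℝ) : Measure (EuclideanSpace ℝ (Fin d)) :=
  volume.withDensity fun x =>
    ENNReal.ofReal ((2 * π * σ ^ 2) ^ (-(d : ℝ) / 2) * Real.exp (-‖x‖ ^ 2 / (2 * σ ^ 2)))

/-- The Kullback–Leibler divergence `KL(P‖Q) = ∫ log (dP/dQ) dP` when `P ≪ Q`
(and the integral makes sense), and `+∞` otherwise. -/
noncomputable def KL {α : Type*} [MeasurableSpace α] (P Q : Measure α) : ℝ≥0∞ :=
  if P ≪ Q ∧ Integrable (fun x => Real.log (P.rnDeriv Q x).toReal) P then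
    ENNReal.ofReal (∫ x, Real.log (P.rnDeriv Q x).toReal ∂P) else ⊤

/-- The Jensen–Shannon divergence `JS(P‖Q) = ½·KL(P‖m) + ½·KL(Q‖m)` where
`m = ½·P + ½·Q` is the equal-weight mixture. -/
noncomputable def JS {α : Type*} [MeasurableSpace α] (P Q : Measure α) : ℝ≥0∞ :=
  2⁻¹ * KL P ((2 : ℝ≥0∞)⁻¹ • P + (2 : ℝ≥0∞)⁻¹ • Q) +
    2⁻¹ * KL Q ((2 : ℝ≥0∞)⁻¹ • P + (2 : ℝ≥0∞)⁻¹ • Q)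

/-- The diffusive JS divergence: a positively weighted sum of JS divergences between
Gaussian-smoothed versions of the two measures at noise levels `σ 1, …, σ T`. -/
noncomputable def DiJS {d : ℕ} (T : ℕ) (w σ : Fin T → ℝ)
    (μ ν : Measure (EuclideanSpace ℝ (Fin d))) : ℝ≥0∞ :=
  ∑ t : Fin T, ENNReal.ofReal (w t) * JS (μ.conv (gaussianIso d (σ t))) (ν.conv (gaussianIso d (σ t)))

lemma gaussianIso_prob (d : ℕ) {σ : ℝ} (hσ : 0 < σ) : IsProbabilityMeasure (gaussianIso d σ) := by
  have hb : 0 < 1 / (2 * σ ^ 2) := by positivity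
  have hI := GaussianFourier.integral_rexp_neg_mul_sq_norm (V := EuclideanSpace ℝ (Fin d)) hb
  rw [finrank_euclideanSpace_fin] at hI
  have hp : 0 < (π / (1 / (2 * σ ^ 2))) ^ ((d : ℝ) / 2) := by positivity
  have hint : Integrable (fun v : EuclideanSpace ℝ (Fin d) =>
      Real.exp (-(1 / (2 * σ ^ 2)) * ‖v‖ ^ 2)) := by
    by_contra hn
    rw [integral_undef hn] at hI
    exact hp.ne hI
  have hfun : ∀ x : EuclideanSpace ℝ (Fin d), Real.exp (-‖x‖ ^ 2 / (2 * σ ^ 2)) =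
      Real.exp (-(1 / (2 * σ ^ 2)) * ‖x‖ ^ 2) := by
    intro x; congr 1; field_simp
  constructor
  unfold gaussianIso
  simp_rw [hfun]
  rw [withDensity_apply _ MeasurableSet.univ, Measure.restrict_univ,
    ← ofReal_integral_eq_lintegral_ofReal (hint.const_mul _)
      (Filter.Eventually.of_forall fun x => by positivity), integral_const_mul, hI]
  have : π / (1 / (2 * σ ^ 2)) = 2 * π * σ ^ 2 := by field_simp
  rw [this, ← Real.rpow_add (by positivity)]
  have h0 : -(d : ℝ) / 2 + d / 2 = 0 := by ring
  rw [h0]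
  simp

lemma gaussianIso_charFun_ne_zero (d : ℕ) {σ : ℝ} (hσ : 0 < σ) (t : EuclideanSpace ℝ (Fin d)) :
    charFun (gaussianIso d σ) t ≠ 0 := by
  have hb : 0 < (((1 / (2 * σ ^ 2) : ℝ)) : ℂ).re := by
    rw [Complex.ofReal_re]; positivity
  have hI := GaussianFourier.integral_cexp_neg_mul_sq_norm_add hb Complex.I t
  have key : charFun (gaussianIso d σ) t = (((2 * π * σ ^ 2) ^ (-(d : ℝ) / 2) : ℝ) : ℂ) *
      ∫ v : EuclideanSpace ℝ (Fin d), Complex.exp (-(((1 / (2 * σ ^ 2) : ℝ)) : ℂ) * ‖v‖ ^ 2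
        + Complex.I * (inner ℝ t v : ℝ)) := by
    rw [charFun_apply, gaussianIso, integral_withDensity_eq_integral_toReal_smul
      (by fun_prop) (by simp), ← integral_const_mul]
    congr 1
    ext x
    rw [ENNReal.toReal_ofReal (by positivity), Complex.real_smul, Complex.ofReal_mul, mul_assoc,
      Complex.ofReal_exp, ← Complex.exp_add, real_inner_comm]
    congr 2
    push_cast
    field_simp
  rw [key, hI]
  refine mul_ne_zero ?_ (mul_ne_zero ?_ (Complex.exp_ne_zero _))
  · exact_mod_cast (show (0 : ℝ) < (2 * π * σ ^ 2) ^ (-(d : ℝ) / 2) by positivity).ne'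
  · rw [Ne, Complex.cpow_eq_zero_iff, not_and_or]
    left
    have : (0 : ℝ) < π / (1 / (2 * σ ^ 2)) := by positivity
    exact_mod_cast this.ne'

lemma KL_eq_klDiv {α : Type*} [MeasurableSpace α] (P Q : Measure α)
    [IsProbabilityMeasure P] [IsProbabilityMeasure Q] :
    KL P Q = InformationTheory.klDiv P Q := by
  rw [InformationTheory.klDiv_def, KL]
  simp [llr_def]

lemma JS_eq_zero_iff {α : Type*} [MeasurableSpace α] (P Q : Measure α)
    [IsProbabilityMeasure P] [IsProbabilityMeasure Q] : JS P Q = 0 ↔ P = Q := by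
  have hm : IsProbabilityMeasure ((2 : ℝ≥0∞)⁻¹ • P + (2 : ℝ≥0∞)⁻¹ • Q) := by
    constructor
    simp [ENNReal.inv_two_add_inv_two]
  unfold JS
  rw [KL_eq_klDiv, KL_eq_klDiv]
  simp only [add_eq_zero, mul_eq_zero, InformationTheory.klDiv_eq_zero_iff]
  have h2 : (2 : ℝ≥0∞)⁻¹ ≠ 0 := by simp
  simp only [h2, false_or]
  constructor
  · rintro ⟨h1, h2⟩
    exact h1.trans h2.symm
  · rintro rfl
    simp [← add_smul, ENNReal.inv_two_add_inv_two]

/-- Validity of the diffusive JS divergence: `DiJS(μ‖ν) = 0` iff `μ = ν`. -/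
theorem diJS_eq_zero_iff {d : ℕ} {T : ℕ} (hT : 1 ≤ T) (w σ : Fin T → ℝ)
    (hw : ∀ t, 0 < w t) (hσ : ∀ t, 0 < σ t)
    (μ ν : Measure (EuclideanSpace ℝ (Fin d)))
    [IsProbabilityMeasure μ] [IsProbabilityMeasure ν] :
    DiJS T w σ μ ν = 0 ↔ μ = ν := by
  have key : ∀ t, JS (μ.conv (gaussianIso d (σ t))) (ν.conv (gaussianIso d (σ t))) = 0 ↔ μ = ν := by
    intro t
    have := gaussianIso_prob d (hσ t)
    rw [JS_eq_zero_iff]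
    refine ⟨fun h => Measure.ext_of_charFun ?_, fun h => by rw [h]⟩
    ext x
    have h' := congrArg (fun m => charFun m x) h
    simp only [charFun_conv] at h'
    exact mul_right_cancel₀ (gaussianIso_charFun_ne_zero d (hσ t) x) h'
  have hw' : ∀ t, ENNReal.ofReal (w t) ≠ 0 := fun t => by simpa using hw t
  unfold DiJS
  simp only [Finset.sum_eq_zero_iff, Finset.mem_univ, true_imp_iff, mul_eq_zero, hw', false_or, key]
  exact ⟨fun h => h ⟨0, hT⟩, fun h _ => h⟩
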